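/- Let G be a connected balanced bipartite graph of order 2n with n ≥ 5 whose bipartite toughness satisfies t^B(G) ≥ 1. If ρ(G) ≥ ρ(G_{n,n}), then G contains a 2-factor, unless G is isomorphic to G_{n,n}. -/

import Mathlib

open SimpleGraph

/-- The number of connected components of `G - S`. -/
noncomputable def numComp {V : Type*} (G : SimpleGraph V) (S : Set V) : ℕ :=
  Nat.card (SimpleGraph.ConnectedComponent (SimpleGraph.induce Sᶜ G))

/-- `X, Y` form a bipartition of the graph `G`. -/
def IsBipartition {V : Type*} (G : SimpleGraph V) (X Y : Set V) : Prop :=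
  X ∪ Y = Set.univ ∧ Disjoint X Y ∧
    ∀ ⦃u v⦄, G.Adj u v → (u ∈ X ∧ v ∈ Y) ∨ (u ∈ Y ∧ v ∈ X)

/-- The bipartite toughness of `G` (with parts `X`, `Y`) is at least `1`:
`c(G - S) ≤ |S|` for every proper subset `S ⊂ X` (or `S ⊂ Y`) with `c(G - S) > 1`. -/
def BTough1 {V : Type*} (G : SimpleGraph V) (X Y : Set V) : Prop :=
  ∀ S : Set V, (S ⊂ X ∨ S ⊂ Y) → 1 < numComp G S → numComp G S ≤ S.ncard

/-- The toughness of a (non-complete) graph `G`. -/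
noncomputable def toughness {V : Type*} (G : SimpleGraph V) : ℝ :=
  sInf {x : ℝ | ∃ S : Set V, 1 < numComp G S ∧ x = (S.ncard : ℝ) / (numComp G S : ℝ)}

/-- The spectral radius of `G`: the largest eigenvalue of its adjacency matrix. -/
noncomputable def specRad {V : Type*} [Fintype V] (G : SimpleGraph V) : ℝ :=
  letI := Classical.decRel G.Adj
  sSup {μ : ℝ | Module.End.HasEigenvalue (Matrix.mulVecLin (G.adjMatrix ℝ)) μ}

/-- `G` has a 2-factor: a spanning subgraph in which every vertex has degree 2. -/
def Has2Factor {V : Type*} (G : SimpleGraph V) : Prop :=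
  ∃ F : SimpleGraph V, F ≤ G ∧ ∀ v, (F.neighborSet v).ncard = 2

/-- The graph `G_{n,n}`: parts `X = {u_1,…,u_n}` (left) and `Y = {v_1,…,v_n}` (right);
`u_i ~ v_j` for all `i` and all `j ≥ 4`; moreover `v_1, v_2, v_3` are joined to `u_1`,
and `v_i` is joined to `u_{i+1}` for `1 ≤ i ≤ 3` (indices here are 0-based). -/
def Gnn (n : ℕ) : SimpleGraph (Fin n ⊕ Fin n) :=
  SimpleGraph.fromRel fun a b =>
    match a, b with
    | Sum.inl i, Sum.inr j =>
        3 ≤ (j : ℕ) ∨ ((j : ℕ) < 3 ∧ ((i : ℕ) = 0 ∨ (i : ℕ) = (j : ℕ) + 1))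
    | _, _ => False

/-- The graph `M_n`: the complete graph on `{v_1,…,v_{n-3}}` (the vertices of index `< n-3`),
together with three vertices `u_1, u_2, u_3` (the vertices of index `≥ n-3`), each joined to
`v_1` (index `0`), and `u_i` joined to `v_{i+1}` for `1 ≤ i ≤ 3`. -/
def Mn (n : ℕ) : SimpleGraph (Fin n) :=
  SimpleGraph.fromRel fun a b =>
    ((a : ℕ) < n - 3 ∧ (b : ℕ) < n - 3) ∨
      (n - 3 ≤ (a : ℕ) ∧ ((b : ℕ) = 0 ∨ (b : ℕ) = (a : ℕ) - (n - 3) + 1))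

/-!
By Hall's theorem, applied to the assignment of edges to their endpoints, a balanced bipartite graph
without a 2-factor has sets `A ⊆ X` and `B ⊆ Y` with `2|A| + e(X \ A, B) < 2|B|`. Exchanging
`(A, B)` for `(Y \ B, X \ A)` we may assume `|A| + |B| ≤ n`.

Being 1-tough forces more than `|B| - |A|` vertices on each side of the cut between `X \ A` and `B`
to meet its fewer than `2 (|B| - |A|)` edges, so these edges are spread out almost as a matching. In
particular `1 ≤ |A| ≤ |B| - 2`. If `|B| ≥ 4`, comparing the square of the adjacency matrix on a
suitable test vector with the positive eigenvector yields `ρ(G)² ≤ n (n - 3) + 12 / n`, while a test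
vector on `G_{n,n}` yields `ρ(G_{n,n})² > n (n - 3) + 12 / n`. In the remaining case `|A| = 1` and
`|B| = 3` the cut is a matching covering `B`, so `G` embeds as a spanning subgraph of `G_{n,n}`,
and the strict monotonicity of the spectral radius leaves only equality.
-/

section PositiveEigenvector

open Matrix

variable {ι : Type*} [Fintype ι] {M : Matrix ι ι ℝ} {x y : ι → ℝ} {μ t : ℝ}

theorem dotProduct_lt_dotProduct_of_pos {z : ι → ℝ} (hx : ∀ i, 0 < x i) (h : y < z) :
    x ⬝ᵥ y < x ⬝ᵥ z := by
  obtain ⟨hle, i, hi⟩ := Pi.lt_def.1 h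
  exact Finset.sum_lt_sum (fun j _ => mul_le_mul_of_nonneg_left (hle j) (hx j).le)
    ⟨i, Finset.mem_univ i, mul_lt_mul_of_pos_left hi (hx i)⟩

theorem dotProduct_mulVec_of_vecMul_eq_smul (h : x ᵥ* M = μ • x) :
    x ⬝ᵥ M *ᵥ y = μ * (x ⬝ᵥ y) := by
  rw [dotProduct_mulVec, h, smul_dotProduct, smul_eq_mul]

theorem lt_of_smul_lt_mulVec (hx : ∀ i, 0 < x i) (h : x ᵥ* M = μ • x) (hy : 0 ≤ y)
    (hlt : t • y < M *ᵥ y) : t < μ := by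
  have hpair := dotProduct_lt_dotProduct_of_pos hx hlt
  rw [dotProduct_mulVec_of_vecMul_eq_smul h, dotProduct_smul, smul_eq_mul] at hpair
  exact lt_of_mul_lt_mul_right hpair (dotProduct_nonneg_of_nonneg (fun i => (hx i).le) hy)

theorem le_of_mulVec_le_smul (hx : ∀ i, 0 < x i) (h : x ᵥ* M = μ • x) (hy : 0 < y)
    (hle : M *ᵥ y ≤ t • y) : μ ≤ t := by
  have hpair := dotProduct_le_dotProduct_of_nonneg_left hle fun i => (hx i).le
  rw [dotProduct_mulVec_of_vecMul_eq_smul h, dotProduct_smul, smul_eq_mul] at hpair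
  have hpos : 0 < x ⬝ᵥ y := by simpa using dotProduct_lt_dotProduct_of_pos hx hy
  exact le_of_mul_le_mul_right hpair hpos

end PositiveEigenvector

section PerronFrobenius

open Matrix

variable {ι : Type*} [Fintype ι] {A : Matrix ι ι ℝ}

theorem posSemidef_algebraMap_sSup_spectrum_sub [DecidableEq ι] (hA : A.IsHermitian) :
    (algebraMap ℝ (Matrix ι ι ℝ) (sSup (spectrum ℝ A)) - A).PosSemidef := by
  refine posSemidef_iff_isHermitian_and_spectrum_nonneg.2 ⟨?_, ?_⟩
  · exact ((IsSelfAdjoint.all _).algebraMap _).isHermitian.sub hA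
  · rw [← spectrum.singleton_sub_eq]
    rintro _ ⟨_, rfl, ν, hν, rfl⟩
    exact sub_nonneg.2 (le_csSup A.finite_real_spectrum.bddAbove hν)

theorem sSup_spectrum_mem [DecidableEq ι] [Nonempty ι] (hA : A.IsHermitian) :
    sSup (spectrum ℝ A) ∈ spectrum ℝ A :=
  Set.Nonempty.csSup_mem ⟨_, hA.eigenvalues_mem_spectrum_real (Classical.arbitrary ι)⟩
    A.finite_real_spectrum

theorem dotProduct_mulVec_le_abs (hA : ∀ i j, 0 ≤ A i j) (x : ι → ℝ) :
    x ⬝ᵥ A *ᵥ x ≤ |x| ⬝ᵥ A *ᵥ |x| := by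
  simp only [dotProduct, mulVec, Finset.mul_sum]
  refine Finset.sum_le_sum fun i _ => Finset.sum_le_sum fun j _ => ?_
  calc x i * (A i j * x j) ≤ |x i * (A i j * x j)| := le_abs_self _
    _ = |x| i * (A i j * |x| j) := by rw [abs_mul, abs_mul, abs_of_nonneg (hA i j)]; rfl

theorem exists_nonneg_mulVec_eq_sSup_spectrum_smul [DecidableEq ι] [Nonempty ι]
    (hA : A.IsHermitian) (hnonneg : ∀ i j, 0 ≤ A i j) :
    ∃ x : ι → ℝ, 0 < x ∧ A *ᵥ x = sSup (spectrum ℝ A) • x := by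
  set ρ := sSup (spectrum ℝ A)
  have hmem : ρ ∈ spectrum ℝ (toLin' A) := by
    rw [spectrum_toLin']
    exact sSup_spectrum_mem hA
  obtain ⟨x, hx⟩ := (Module.End.hasEigenvalue_iff_mem_spectrum.2 hmem).exists_hasEigenvector
  have hAx : A *ᵥ x = ρ • x := by simpa using hx.apply_eq_smul
  have hform (y : ι → ℝ) : y ⬝ᵥ (algebraMap ℝ (Matrix ι ι ℝ) ρ - A) *ᵥ y =
      ρ * (y ⬝ᵥ y) - y ⬝ᵥ A *ᵥ y := by
    rw [Algebra.algebraMap_eq_smul_one, sub_mulVec, smul_mulVec, one_mulVec, dotProduct_sub,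
      dotProduct_smul, smul_eq_mul]
  have hsq : |x| ⬝ᵥ |x| = x ⬝ᵥ x := Finset.sum_congr rfl fun i _ => abs_mul_abs_self (x i)
  have hpsd := posSemidef_algebraMap_sSup_spectrum_sub hA
  have hzero : |x| ⬝ᵥ (algebraMap ℝ (Matrix ι ι ℝ) ρ - A) *ᵥ |x| = 0 := by
    refine le_antisymm ?_ (by simpa using hpsd.dotProduct_mulVec_nonneg |x|)
    have hle := dotProduct_mulVec_le_abs hnonneg x
    rw [hAx, dotProduct_smul, smul_eq_mul] at hle
    rw [hform, hsq]
    linarith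
  refine ⟨|x|, (abs_nonneg x).lt_of_ne' (by simpa using hx.2), ?_⟩
  have hker := (hpsd.dotProduct_mulVec_zero_iff |x|).1 (by simpa using hzero)
  rw [Algebra.algebraMap_eq_smul_one, sub_mulVec, smul_mulVec, one_mulVec, sub_eq_zero] at hker
  exact hker.symm

end PerronFrobenius

section SpectralRadius

open Matrix

variable {V W : Type*} [Fintype V] [Fintype W] {G H : SimpleGraph V}

theorem specRad_eq_sSup_spectrum [DecidableEq V] (G : SimpleGraph V) [DecidableRel G.Adj] :
    specRad G = sSup (spectrum ℝ (G.adjMatrix ℝ)) := by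
  obtain rfl : ‹DecidableRel G.Adj› = Classical.decRel G.Adj := Subsingleton.elim _ _
  simp only [specRad, Module.End.hasEigenvalue_iff_mem_spectrum, Set.ofPred_mem_eq,
    ← toLin'_apply', spectrum_toLin']

theorem specRad_congr {K : SimpleGraph W} (e : G ≃g K) : specRad G = specRad K := by
  classical
  rw [specRad_eq_sSup_spectrum, specRad_eq_sSup_spectrum, ← e.reindex_adjMatrix ℝ,
    ← coe_reindexAlgEquiv ℝ, AlgEquiv.spectrum_eq]

theorem pos_of_connected_of_mulVec_eq_smul [DecidableRel G.Adj] (hG : G.Connected) {x : V → ℝ}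
    {μ : ℝ} (hx : 0 < x) (h : G.adjMatrix ℝ *ᵥ x = μ • x) (v : V) : 0 < x v := by
  have hzero {u w : V} (huw : G.Adj u w) (hu : x u = 0) : x w = 0 := by
    have hsum := congrFun h u
    rw [adjMatrix_mulVec_apply, Pi.smul_apply, hu, smul_zero,
      Finset.sum_eq_zero_iff_of_nonneg fun i _ => hx.le i] at hsum
    exact hsum w (by simpa using huw)
  refine (hx.le v).lt_of_ne' fun hv => hx.ne' (funext fun w => ?_)
  obtain ⟨p⟩ := hG.preconnected v w
  induction p with
  | nil => exact hv
  | cons huw _ ih => exact ih (hzero huw hv)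

theorem exists_pos_adjMatrix_mulVec_eq_specRad_smul [DecidableRel G.Adj] (hG : G.Connected) :
    ∃ x : V → ℝ, (∀ v, 0 < x v) ∧ G.adjMatrix ℝ *ᵥ x = specRad G • x := by
  classical
  have := hG.nonempty
  rw [specRad_eq_sSup_spectrum]
  have hnonneg (u v : V) : 0 ≤ G.adjMatrix ℝ u v := by
    rw [adjMatrix_apply]
    split_ifs
    exacts [zero_le_one, le_rfl]
  obtain ⟨x, hx, h⟩ := exists_nonneg_mulVec_eq_sSup_spectrum_smul
    (isHermitian_iff_isSymm.2 G.isSymm_adjMatrix) hnonneg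
  exact ⟨x, pos_of_connected_of_mulVec_eq_smul hG hx h, h⟩

theorem exists_pos_vecMul_adjMatrix_eq_specRad_smul [DecidableRel G.Adj] (hG : G.Connected) :
    ∃ x : V → ℝ, (∀ v, 0 < x v) ∧ x ᵥ* G.adjMatrix ℝ = specRad G • x := by
  obtain ⟨x, hx, h⟩ := exists_pos_adjMatrix_mulVec_eq_specRad_smul hG
  exact ⟨x, hx, by rw [← mulVec_transpose, transpose_adjMatrix, h]⟩

theorem specRad_nonneg (hG : G.Connected) : 0 ≤ specRad G := by
  classical
  obtain ⟨x, hx, h⟩ := exists_pos_adjMatrix_mulVec_eq_specRad_smul hG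
  obtain ⟨v⟩ := hG.nonempty
  have hv := congrFun h v
  rw [adjMatrix_mulVec_apply, Pi.smul_apply, smul_eq_mul] at hv
  refine nonneg_of_mul_nonneg_left ?_ (hx v)
  exact hv ▸ Finset.sum_nonneg fun u _ => (hx u).le

theorem specRad_lt_of_lt (hG : G.Connected) (hlt : G < H) : specRad G < specRad H := by
  classical
  obtain ⟨x, hx, hGx⟩ := exists_pos_adjMatrix_mulVec_eq_specRad_smul hG
  obtain ⟨y, hy, hyH⟩ := exists_pos_vecMul_adjMatrix_eq_specRad_smul (hG.mono hlt.le)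
  refine lt_of_smul_lt_mulVec hy hyH (fun v => (hx v).le) ?_
  have hsub (v : V) : G.neighborFinset v ⊆ H.neighborFinset v := fun w => by
    simpa using fun h => hlt.le h
  obtain ⟨u, w, huw, hnot⟩ : ∃ u w, H.Adj u w ∧ ¬G.Adj u w := by
    simpa [SimpleGraph.le_iff_adj] using hlt.not_ge
  rw [← hGx, Pi.lt_def]
  simp only [Pi.le_def, adjMatrix_mulVec_apply]
  refine ⟨fun v => Finset.sum_le_sum_of_subset_of_nonneg (hsub v) fun w _ _ => (hx w).le, u, ?_⟩
  exact Finset.sum_lt_sum_of_subset (hsub u) (by simpa using huw) (by simpa using hnot) (hx w)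
    fun w _ _ => (hx w).le

theorem exists_pos_vecMul_adjMatrix_mul_self_eq_smul [DecidableRel G.Adj] (hG : G.Connected) :
    ∃ x : V → ℝ, (∀ v, 0 < x v) ∧
      x ᵥ* (G.adjMatrix ℝ * G.adjMatrix ℝ) = specRad G ^ 2 • x := by
  obtain ⟨x, hx, h⟩ := exists_pos_vecMul_adjMatrix_eq_specRad_smul hG
  exact ⟨x, hx, by rw [← vecMul_vecMul, h, smul_vecMul, h, smul_smul, sq]⟩

theorem lt_specRad_sq_of_smul_lt [DecidableRel G.Adj] (hG : G.Connected) {y : V → ℝ} {t : ℝ}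
    (hy : 0 ≤ y) (h : t • y < G.adjMatrix ℝ *ᵥ G.adjMatrix ℝ *ᵥ y) : t < specRad G ^ 2 := by
  obtain ⟨x, hx, hxG⟩ := exists_pos_vecMul_adjMatrix_mul_self_eq_smul hG
  exact lt_of_smul_lt_mulVec hx hxG hy (by rwa [← mulVec_mulVec])

theorem specRad_sq_le_of_le_smul [DecidableRel G.Adj] (hG : G.Connected) {y : V → ℝ} {t : ℝ}
    (hy : 0 < y) (h : G.adjMatrix ℝ *ᵥ G.adjMatrix ℝ *ᵥ y ≤ t • y) : specRad G ^ 2 ≤ t := by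
  obtain ⟨x, hx, hxG⟩ := exists_pos_vecMul_adjMatrix_mul_self_eq_smul hG
  exact le_of_mulVec_le_smul hx hxG hy (by rwa [← mulVec_mulVec])

theorem nonempty_iso_of_comap_le {K : SimpleGraph W} (hG : G.Connected)
    (hrho : specRad K ≤ specRad G) (e : W ≃ V) (hle : G.comap e ≤ K) : Nonempty (G ≃g K) := by
  have iso : G.comap e ≃g G := Iso.comap e G
  rcases hle.eq_or_lt with rfl | hlt
  · exact ⟨iso.symm⟩
  · have hspec := specRad_lt_of_lt (iso.connected_iff.2 hG) hlt
    rw [specRad_congr iso] at hspec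
    exact absurd hrho hspec.not_ge

end SpectralRadius

section LowerBound

open Matrix

theorem gnn_adj_inl_inr {n : ℕ} {i j : Fin n} :
    (Gnn n).Adj (.inl i) (.inr j) ↔ 3 ≤ (j : ℕ) ∨ (i : ℕ) = 0 ∨ (i : ℕ) = j + 1 := by
  simp only [Gnn, fromRel_adj, ne_eq, reduceCtorEq, not_false_eq_true, true_and, or_false]
  grind

theorem not_gnn_adj_inl_inl {n : ℕ} (i j : Fin n) : ¬(Gnn n).Adj (.inl i) (.inl j) := by
  simp [Gnn]

theorem not_gnn_adj_inr_inr {n : ℕ} (i j : Fin n) : ¬(Gnn n).Adj (.inr i) (.inr j) := by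
  simp [Gnn]

theorem gnn_connected {n : ℕ} (hn : 4 ≤ n) : (Gnn n).Connected := by
  have hcenter (j : Fin n) : (Gnn n).Adj (.inl ⟨0, by omega⟩) (.inr j) :=
    gnn_adj_inl_inr.2 (by simp)
  have hfull (i : Fin n) : (Gnn n).Adj (.inl i) (.inr ⟨3, by omega⟩) :=
    gnn_adj_inl_inr.2 (by simp)
  refine connected_iff_exists_forall_reachable _ |>.2 ⟨.inl ⟨0, by omega⟩, ?_⟩
  rintro (i | j)
  · exact (hcenter _).reachable.trans (hfull i).symm.reachable
  · exact (hcenter j).reachable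

theorem adjMatrix_gnn_mulVec_inl {n : ℕ} [DecidableRel (Gnn n).Adj] (y : Fin n ⊕ Fin n → ℝ)
    (i : Fin n) : ((Gnn n).adjMatrix ℝ *ᵥ y) (.inl i) =
      ∑ j : Fin n, if 3 ≤ (j : ℕ) ∨ (i : ℕ) = 0 ∨ (i : ℕ) = j + 1 then y (.inr j) else 0 := by
  simp [mulVec, dotProduct, adjMatrix_apply, gnn_adj_inl_inr, not_gnn_adj_inl_inl]

theorem adjMatrix_gnn_mulVec_inr {n : ℕ} [DecidableRel (Gnn n).Adj] (y : Fin n ⊕ Fin n → ℝ)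
    (j : Fin n) : ((Gnn n).adjMatrix ℝ *ᵥ y) (.inr j) =
      ∑ i : Fin n, if 3 ≤ (j : ℕ) ∨ (i : ℕ) = 0 ∨ (i : ℕ) = j + 1 then y (.inl i) else 0 := by
  simp [mulVec, dotProduct, adjMatrix_apply, (Gnn n).adj_comm (.inr j), gnn_adj_inl_inr,
    not_gnn_adj_inr_inr]

/-- The test vector for the lower bound on `ρ(G_{n,n})²`: it is `2` on the vertices `v₁, v₂, v₃`,
`n` on the other vertices of `Y`, and `0` on `X`. -/
def gnnWeight (n : ℕ) : Fin n ⊕ Fin n → ℝ :=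
  Sum.elim 0 fun j => if 3 ≤ (j : ℕ) then n else 2

theorem adjMatrix_gnn_mulVec_gnnWeight {n : ℕ} (hn : 4 ≤ n) [DecidableRel (Gnn n).Adj] :
    (Gnn n).adjMatrix ℝ *ᵥ gnnWeight n = Sum.elim
      (fun i : Fin n =>
        (n * (n - 3) : ℝ) + if (i : ℕ) = 0 then 6 else if (i : ℕ) ≤ 3 then 2 else 0) 0 := by
  obtain ⟨m, rfl⟩ := Nat.exists_eq_add_of_le' hn
  ext (i | j)
  · rw [adjMatrix_gnn_mulVec_inl]
    rcases i with ⟨_ | _ | _ | _ | i, hi⟩ <;>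
      simp [gnnWeight, Fin.sum_univ_succ, add_assoc] <;> ring
  · rw [adjMatrix_gnn_mulVec_inr]
    simp [gnnWeight]

theorem adjMatrix_gnn_mulVec_mulVec_gnnWeight {n : ℕ} (hn : 4 ≤ n) [DecidableRel (Gnn n).Adj] :
    (Gnn n).adjMatrix ℝ *ᵥ (Gnn n).adjMatrix ℝ *ᵥ gnnWeight n = Sum.elim (0 : Fin n → ℝ)
      fun j : Fin n =>
        (if 3 ≤ (j : ℕ) then n * (n * (n - 3)) + 12 else 2 * (n * (n - 3)) + 8 : ℝ) := by
  rw [adjMatrix_gnn_mulVec_gnnWeight hn]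
  obtain ⟨m, rfl⟩ := Nat.exists_eq_add_of_le' hn
  ext (i | j)
  · rw [adjMatrix_gnn_mulVec_inl]
    simp
  · rw [adjMatrix_gnn_mulVec_inr]
    rcases j with ⟨_ | _ | _ | j, hj⟩ <;> simp [Fin.sum_univ_succ, add_assoc] <;> ring

theorem lt_specRad_gnn_sq {n : ℕ} (hn : 4 ≤ n) :
    (n * (n - 3) + 12 / n : ℝ) < specRad (Gnn n) ^ 2 := by
  classical
  have hn' : (4 : ℝ) ≤ n := by exact_mod_cast hn
  have hbig : (n * (n - 3) + 12 / n : ℝ) * n = n * (n * (n - 3)) + 12 := by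
    field_simp
  have hsmall : (n * (n - 3) + 12 / n : ℝ) * 2 < 2 * (n * (n - 3)) + 8 := by
    have hdiv : (12 / n : ℝ) ≤ 12 / 4 := by gcongr
    linarith
  refine lt_specRad_sq_of_smul_lt (gnn_connected hn) (y := gnnWeight n) ?_ ?_
  · rintro (_ | j) <;> simp only [gnnWeight, Sum.elim_inl, Sum.elim_inr, Pi.zero_apply, le_rfl]
    split_ifs <;> positivity
  rw [adjMatrix_gnn_mulVec_mulVec_gnnWeight hn, Pi.lt_def]
  refine ⟨?_, .inr ⟨0, by omega⟩, by simpa [gnnWeight] using hsmall⟩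
  rintro (i | j) <;> simp only [gnnWeight, Pi.smul_apply, Sum.elim_inl, Sum.elim_inr, smul_eq_mul,
    Pi.zero_apply, mul_zero, le_rfl]
  split_ifs
  exacts [hbig.le, hsmall.le]

end LowerBound

section HallWithDemands

open Finset

variable {ι α : Type*} [DecidableEq α]

theorem exists_pairwise_disjoint_card_eq {t : ι → Finset α} {c : ι → ℕ}
    (h : ∀ s : Finset ι, ∑ i ∈ s, c i ≤ #(s.biUnion t)) :
    ∃ S : ι → Finset α, (∀ i, S i ⊆ t i) ∧ (∀ i, #(S i) = c i) ∧
      Pairwise (Function.onFun Disjoint S) := by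
  classical
  obtain ⟨φ, hφ, hmem⟩ :=
      (Finset.all_card_le_biUnion_card_iff_exists_injective
        fun p : Σ i, Fin (c i) => t p.1).1 fun s => by
    calc #s ≤ #((s.image Sigma.fst).sigma fun _ => univ) :=
          card_le_card fun p hp => by simpa using ⟨p.2, hp⟩
      _ = ∑ i ∈ s.image Sigma.fst, c i := by simp
      _ ≤ #(s.biUnion fun p => t p.1) := by simpa [image_biUnion] using h (s.image Sigma.fst)
  refine ⟨fun i => univ.image fun k => φ ⟨i, k⟩, fun i => ?_, fun i => ?_, fun i j hij => ?_⟩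
  · simpa [image_subset_iff] using fun k => hmem ⟨i, k⟩
  · rw [card_image_of_injective _ fun k l hkl => by simpa using hφ hkl, card_univ, Fintype.card_fin]
  · simp only [Function.onFun, Finset.disjoint_left, mem_image, mem_univ, true_and]
    rintro _ ⟨k, rfl⟩ ⟨l, hl⟩
    exact hij (congrArg Sigma.fst (hφ hl)).symm

end HallWithDemands

section BipartiteFactor

open Finset

variable {V : Type*} {G : SimpleGraph V}

theorem IsBipartition.isBipartiteWith {X Y : Set V} (hb : IsBipartition G X Y) :
    G.IsBipartiteWith X Y :=
  ⟨hb.2.1, hb.2.2⟩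

theorem IsBipartition.symm {X Y : Set V} (hb : IsBipartition G X Y) : IsBipartition G Y X :=
  ⟨by rw [Set.union_comm, hb.1], hb.2.1.symm, fun _ _ h => (hb.2.2 h).symm⟩

theorem mem_incidenceFinset_fromEdgeSet [DecidableEq V] {s : Finset (Sym2 V)}
    (hs : (s : Set (Sym2 V)) ⊆ G.edgeSet) {v : V} {e : Sym2 V}
    [Fintype ((fromEdgeSet (s : Set (Sym2 V))).neighborSet v)] :
    e ∈ (fromEdgeSet (s : Set (Sym2 V))).incidenceFinset v ↔ e ∈ s ∧ v ∈ e := by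
  rw [mem_incidenceFinset, incidenceSet, edgeSet_fromEdgeSet, sdiff_eq_left.2]
  · rfl
  · exact Set.disjoint_left.2 fun e he => G.not_isDiag_of_mem_edgeSet (hs he)

variable {X Y : Finset V}

theorem IsBipartition.mem_left_or_mem_right (hb : IsBipartition G (X : Set V) Y) (v : V) :
    v ∈ X ∨ v ∈ Y := by
  simpa [← hb.1] using Set.mem_univ v

theorem IsBipartition.disjoint (hb : IsBipartition G (X : Set V) Y) : Disjoint X Y :=
  disjoint_coe.1 hb.2.1

theorem IsBipartition.mem_left (hb : IsBipartition G (X : Set V) Y) {u v : V} (h : G.Adj u v)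
    (hv : v ∈ Y) : u ∈ X :=
  hb.isBipartiteWith.mem_of_mem_adj' hv h

theorem IsBipartition.neighborFinset_subset_left (hb : IsBipartition G (X : Set V) Y) {v : V}
    [Fintype (G.neighborSet v)] (hv : v ∈ Y) : G.neighborFinset v ⊆ X := fun u hu =>
  hb.mem_left ((G.mem_neighborFinset v u).1 hu).symm hv

theorem IsBipartition.neighborFinset_subset_right (hb : IsBipartition G (X : Set V) Y) {u : V}
    [Fintype (G.neighborSet u)] (hu : u ∈ X) : G.neighborFinset u ⊆ Y :=
  hb.symm.neighborFinset_subset_left hu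

variable [Fintype V] [DecidableEq V] [DecidableRel G.Adj] {f : V → ℕ}

theorem card_interedges_eq_sum_left (P Q : Finset V) :
    #(G.interedges P Q) = ∑ u ∈ P, #(G.neighborFinset u ∩ Q) := by
  rw [interedges_def, card_filter, sum_product]
  refine sum_congr rfl fun u _ => ?_
  rw [← card_filter, inter_comm]
  congr 1
  ext v
  simp

theorem card_interedges_eq_sum_right (P Q : Finset V) :
    #(G.interedges P Q) = ∑ v ∈ Q, #(G.neighborFinset v ∩ P) := by
  rw [← card_interedges_eq_sum_left]
  have := G.symm
  exact Rel.card_interedges_comm P Q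

omit [DecidableEq V] in
theorem IsBipartition.card_interedges_right_eq_sum_degree (hb : IsBipartition G (X : Set V) Y)
    {A : Finset V} (hA : A ⊆ X) : #(G.interedges A Y) = ∑ u ∈ A, G.degree u := by
  classical
  rw [card_interedges_eq_sum_left]
  refine sum_congr rfl fun u hu => ?_
  rw [inter_eq_left.2 (hb.neighborFinset_subset_right (hA hu)), card_neighborFinset_eq_degree]

theorem IsBipartition.sum_degree_add_card_interedges_le (hb : IsBipartition G (X : Set V) Y)
    {A B s : Finset V} (hAX : A ⊆ X) (hBY : B ⊆ Y) (hAs : A ⊆ s) (hBs : B ⊆ s) :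
    ∑ u ∈ A, G.degree u + #(G.interedges (X \ A) B) ≤
      #(s.biUnion fun v => G.incidenceFinset v) := by
  rw [← hb.card_interedges_right_eq_sum_degree hAX,
    ← card_union_of_disjoint (disjoint_of_subset_right (G.interedges_mono subset_rfl hBY)
      (G.interedges_disjoint_left disjoint_sdiff Y))]
  have hXY {p : V × V} (hp : p ∈ G.interedges A Y ∪ G.interedges (X \ A) B) :
      p.1 ∈ X ∧ p.2 ∈ Y := by
    simp only [mem_union, mem_interedges_iff, mem_sdiff] at hp
    grind
  refine card_le_card_of_injOn (fun p => s(p.1, p.2)) (fun p hp => ?_) fun p hp q hq hpq => ?_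
  · simp only [mem_coe, mem_union, mem_interedges_iff] at hp
    simp only [mem_coe, mem_biUnion, mem_incidenceFinset, mk'_mem_incidenceSet_iff]
    rcases hp with ⟨h₁, -, h⟩ | ⟨-, h₂, h⟩
    exacts [⟨_, hAs h₁, h, .inl rfl⟩, ⟨_, hBs h₂, h, .inr rfl⟩]
  · have := Finset.disjoint_left.1 hb.disjoint (hXY hp).1
    have := (hXY hq).2
    simp only [Sym2.eq_iff] at hpq
    grind

theorem IsBipartition.le_degree_of_forall_sum_le (hb : IsBipartition G (X : Set V) Y)
    (hsum : ∑ u ∈ X, f u = ∑ v ∈ Y, f v)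
    (h : ∀ A ⊆ X, ∀ B ⊆ Y, ∑ v ∈ B, f v ≤ ∑ u ∈ A, f u + #(G.interedges (X \ A) B))
    {u : V} (hu : u ∈ X) : f u ≤ G.degree u := by
  have hcut := h (X \ {u}) sdiff_subset Y subset_rfl
  have hsplit := sum_sdiff (f := f) (singleton_subset_iff.2 hu)
  rw [Finset.sdiff_sdiff_eq_self (singleton_subset_iff.2 hu),
    hb.card_interedges_right_eq_sum_degree (singleton_subset_iff.2 hu)] at hcut
  rw [sum_singleton] at hcut hsplit
  omega

-- A vertex of `X` is assigned edges to discard, a vertex of `Y` edges to keep: the factor then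
-- consists of the edges assigned to `Y`.
theorem IsBipartition.exists_edge_assignment (hb : IsBipartition G (X : Set V) Y)
    (hsum : ∑ u ∈ X, f u = ∑ v ∈ Y, f v)
    (h : ∀ A ⊆ X, ∀ B ⊆ Y, ∑ v ∈ B, f v ≤ ∑ u ∈ A, f u + #(G.interedges (X \ A) B)) :
    ∃ S : V → Finset (Sym2 V), (∀ v, S v ⊆ G.incidenceFinset v) ∧
      Pairwise (Function.onFun Disjoint S) ∧
      (∀ u ∈ X, #(S u) = G.degree u - f u) ∧ ∀ v ∈ Y, #(S v) = f v := by
  have hdemand (s : Finset V) : ∑ v ∈ s, (if v ∈ X then G.degree v - f v else f v) ≤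
      #(s.biUnion fun v => G.incidenceFinset v) := by
    have hXs : {v ∈ s | v ∈ X} ⊆ X := fun v hv => (mem_filter.1 hv).2
    have hYs : {v ∈ s | v ∉ X} ⊆ Y := fun v hv =>
      (hb.mem_left_or_mem_right v).resolve_left (mem_filter.1 hv).2
    have hdeg : ∑ v ∈ s with v ∈ X, (G.degree v - f v) + ∑ v ∈ s with v ∈ X, f v =
        ∑ v ∈ s with v ∈ X, G.degree v := by
      rw [← sum_add_distrib]
      exact sum_congr rfl fun v hv =>
        Nat.sub_add_cancel (hb.le_degree_of_forall_sum_le hsum h (hXs hv))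
    have hcut := h _ hXs _ hYs
    have hunion := hb.sum_degree_add_card_interedges_le hXs hYs (filter_subset _ _)
      (filter_subset _ _)
    rw [sum_ite]
    omega
  obtain ⟨S, hS, hcard, hdisj⟩ := exists_pairwise_disjoint_card_eq hdemand
  refine ⟨S, hS, hdisj, fun u hu => by rw [hcard, if_pos hu], fun v hv => ?_⟩
  rw [hcard, if_neg (Finset.disjoint_right.1 hb.disjoint hv)]

theorem coe_biUnion_subset_edgeSet (s : Finset V) {S : V → Finset (Sym2 V)}
    (hS : ∀ v, S v ⊆ G.incidenceFinset v) : (s.biUnion S : Set (Sym2 V)) ⊆ G.edgeSet := by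
  intro e he
  obtain ⟨v, -, hv⟩ := mem_biUnion.1 he
  exact ((G.mem_incidenceFinset v e).1 (hS v hv)).1

theorem IsBipartition.degree_fromEdgeSet_biUnion_le (hb : IsBipartition G (X : Set V) Y)
    {S : V → Finset (Sym2 V)} (hS : ∀ v, S v ⊆ G.incidenceFinset v)
    (hdisj : Pairwise (Function.onFun Disjoint S)) {u : V} (hu : u ∈ X)
    [Fintype ((fromEdgeSet (Y.biUnion S : Set (Sym2 V))).neighborSet u)] :
    (fromEdgeSet (Y.biUnion S : Set (Sym2 V))).degree u ≤ G.degree u - #(S u) := by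
  rw [← card_incidenceFinset_eq_degree, ← card_incidenceFinset_eq_degree,
    ← card_sdiff_of_subset (hS u)]
  refine card_le_card fun e he => ?_
  have heG := coe_biUnion_subset_edgeSet Y hS
  obtain ⟨heS, hue⟩ := (mem_incidenceFinset_fromEdgeSet heG).1 he
  obtain ⟨v, hv, hev⟩ := mem_biUnion.1 heS
  have huv : u ≠ v := ne_of_mem_of_not_mem hu (Finset.disjoint_right.1 hb.disjoint hv)
  exact mem_sdiff.2 ⟨(G.mem_incidenceFinset u e).2 ⟨heG heS, hue⟩,
    fun heu => Finset.disjoint_left.1 (hdisj huv) heu hev⟩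

theorem IsBipartition.degree_fromEdgeSet_biUnion_eq (hb : IsBipartition G (X : Set V) Y)
    {S : V → Finset (Sym2 V)} (hS : ∀ v, S v ⊆ G.incidenceFinset v) {v : V} (hv : v ∈ Y)
    [Fintype ((fromEdgeSet (Y.biUnion S : Set (Sym2 V))).neighborSet v)] :
    (fromEdgeSet (Y.biUnion S : Set (Sym2 V))).degree v = #(S v) := by
  rw [← card_incidenceFinset_eq_degree]
  congr 1
  ext e
  rw [mem_incidenceFinset_fromEdgeSet (coe_biUnion_subset_edgeSet Y hS)]
  have hinc {w : V} (he : e ∈ S w) : e ∈ G.edgeSet ∧ w ∈ e :=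
    (G.mem_incidenceFinset w e).1 (hS w he)
  refine ⟨fun ⟨heS, hve⟩ => ?_, fun he => ⟨mem_biUnion.2 ⟨v, hv, he⟩, (hinc he).2⟩⟩
  obtain ⟨w, hw, hew⟩ := mem_biUnion.1 heS
  by_contra hev
  have hvw : v ≠ w := fun h => hev (h ▸ hew)
  obtain ⟨heG, hwe⟩ := hinc hew
  rw [(Sym2.mem_and_mem_iff hvw).1 ⟨hve, hwe⟩, mem_edgeSet] at heG
  exact Finset.disjoint_left.1 hb.disjoint (hb.mem_left heG hw) hv

omit [Fintype V] in
theorem IsBipartition.exists_le_degree_eq_of_forall_sum_le [Finite V]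
    (hb : IsBipartition G (X : Set V) Y)
    (hsum : ∑ u ∈ X, f u = ∑ v ∈ Y, f v)
    (h : ∀ A ⊆ X, ∀ B ⊆ Y, ∑ v ∈ B, f v ≤ ∑ u ∈ A, f u + #(G.interedges (X \ A) B)) :
    ∃ F ≤ G, ∀ v, (F.neighborSet v).ncard = f v := by
  classical
  have := Fintype.ofFinite V
  obtain ⟨S, hS, hdisj, hSX, hSY⟩ := hb.exists_edge_assignment hsum h
  set F := fromEdgeSet (Y.biUnion S : Set (Sym2 V))
  have hFG : F ≤ G :=
    (fromEdgeSet_mono (coe_biUnion_subset_edgeSet Y hS)).trans_eq (fromEdgeSet_edgeSet G)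
  have hFY : ∀ v ∈ Y, F.degree v = f v := fun v hv => by
    rw [hb.degree_fromEdgeSet_biUnion_eq hS hv, hSY v hv]
  have hFX : ∀ u ∈ X, F.degree u ≤ f u := fun u hu => by
    rw [← Nat.sub_sub_self (hb.le_degree_of_forall_sum_le hsum h hu), ← hSX u hu]
    exact hb.degree_fromEdgeSet_biUnion_le hS hdisj hu
  have hFbip : F.IsBipartiteWith X Y := ⟨hb.2.1, fun _ _ huv => hb.2.2 (hFG huv)⟩
  have hFX' : ∀ u ∈ X, F.degree u = f u := by
    rw [← sum_eq_sum_iff_of_le hFX, isBipartiteWith_sum_degrees_eq hFbip, hsum]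
    exact sum_congr rfl hFY
  refine ⟨F, hFG, fun v => ?_⟩
  rw [← coe_neighborFinset, Set.ncard_coe_finset, card_neighborFinset_eq_degree]
  exact (hb.mem_left_or_mem_right v).elim (hFX' v) (hFY v)

end BipartiteFactor

section DeficientPair

open Finset

variable {V : Type*} [DecidableEq V] {G : SimpleGraph V} [DecidableRel G.Adj] {X Y A B : Finset V}

/-- Subsets `A ⊆ X` and `B ⊆ Y` violating the degree condition for a 2-factor: each vertex of `B`
needs two edges of the 2-factor, but the vertices of `A` provide at most two each and only
`e(X \ A, B)` edges of `G` reach `B` from elsewhere. -/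
structure IsDeficientPair (G : SimpleGraph V) [DecidableRel G.Adj] (X Y A B : Finset V) :
    Prop where
  left_subset : A ⊆ X
  right_subset : B ⊆ Y
  lt : 2 * #A + #(G.interedges (X \ A) B) < 2 * #B

theorem IsDeficientPair.swap (h : IsDeficientPair G X Y A B) (hXY : #X = #Y) :
    IsDeficientPair G Y X (Y \ B) (X \ A) where
  left_subset := sdiff_subset
  right_subset := sdiff_subset
  lt := by
    have hlt := h.lt
    have hA := card_sdiff_add_card_eq_card h.left_subset
    have hB := card_sdiff_add_card_eq_card h.right_subset
    have := G.symm
    rw [Finset.sdiff_sdiff_eq_self h.right_subset]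
    have hcomm : #(G.interedges B (X \ A)) = #(G.interedges (X \ A) B) :=
      Rel.card_interedges_comm B (X \ A)
    omega

theorem IsBipartition.exists_isDeficientPair [Finite V] (hb : IsBipartition G (X : Set V) Y)
    (hXY : #X = #Y) (hG : ¬ Has2Factor G) : ∃ A B, IsDeficientPair G X Y A B := by
  by_contra! hdef
  obtain ⟨F, hF⟩ := hb.exists_le_degree_eq_of_forall_sum_le (f := fun _ => 2)
    (by simp [hXY]) fun A hA B hB => by
      have := mt (IsDeficientPair.mk hA hB) (hdef A B)
      simp only [sum_const, smul_eq_mul]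
      omega
  exact hG ⟨F, hF⟩

end DeficientPair

section Toughness

open Finset

variable {V : Type*} {G : SimpleGraph V}

theorem BTough1.symm {X Y : Set V} (ht : BTough1 G X Y) : BTough1 G Y X :=
  fun S hS => ht S hS.symm

variable [Finite V]

theorem card_lt_numComp {S I : Finset V} {w : V} (hw : w ∉ S) (hwI : w ∉ I) (hIS : Disjoint I S)
    (hN : ∀ v ∈ I, ∀ u, G.Adj v u → u ∈ S) : #I < numComp G S := by
  let H := G.induce (S : Set V)ᶜ
  have hiso {a b : ((S : Set V)ᶜ : Set V)} (ha : (a : V) ∈ I) : H.Reachable a b → a = b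
    | ⟨.nil⟩ => rfl
    | ⟨.cons (v := c) hac _⟩ => (c.2 (hN a ha c hac)).elim
  let comp : Option I → H.ConnectedComponent
    | none => H.connectedComponentMk ⟨w, by simpa using hw⟩
    | some v => H.connectedComponentMk ⟨v, by simpa using Finset.disjoint_left.1 hIS v.2⟩
  have hcomp : Function.Injective comp := by
    rintro (_ | a) (_ | b) h
    · rfl
    · have hbw : (b : V) = w := congrArg Subtype.val (hiso b.2 (ConnectedComponent.exact h).symm)
      exact absurd (hbw ▸ b.2) hwI
    · have haw : (a : V) = w := congrArg Subtype.val (hiso a.2 (ConnectedComponent.exact h))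
      exact absurd (haw ▸ a.2) hwI
    · have hab := congrArg Subtype.val (hiso a.2 (ConnectedComponent.exact h))
      exact congrArg some (Subtype.ext hab)
  calc #I < Nat.card (Option I) := by simp
    _ ≤ numComp G S := Nat.card_le_card_of_injective comp hcomp

variable {X Y : Finset V}

theorem BTough1.card_lt (ht : BTough1 G (X : Set V) Y) (hb : IsBipartition G (X : Set V) Y)
    {S I : Finset V} (hS : S ⊂ X) (hI : I ⊆ Y) (hne : I.Nonempty)
    (hN : ∀ v ∈ I, ∀ u, G.Adj v u → u ∈ S) : #I < #S := by
  obtain ⟨w, hwX, hwS⟩ := exists_of_ssubset hS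
  have hlt : #I < numComp G S := card_lt_numComp hwS
    (fun hwI => Finset.disjoint_left.1 hb.disjoint hwX (hI hwI))
    (disjoint_of_subset_left hI (disjoint_of_subset_right hS.1 hb.disjoint.symm)) hN
  have hle := ht S (.inl (by exact_mod_cast hS)) ((Nat.succ_le_of_lt hne.card_pos).trans_lt hlt)
  rw [Set.ncard_coe_finset] at hle
  exact hlt.trans_le hle

end Toughness

section ToughDegree

open Finset

variable {V : Type*} [Fintype V] {G : SimpleGraph V} [DecidableRel G.Adj] {X Y : Finset V}

theorem BTough1.two_le_degree (ht : BTough1 G (X : Set V) Y) (hb : IsBipartition G (X : Set V) Y)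
    (hX : 2 ≤ #X) {v : V} (hv : v ∈ Y) : 2 ≤ G.degree v := by
  by_contra! hlt
  rw [← card_neighborFinset_eq_degree] at hlt
  have hN : G.neighborFinset v ⊂ X :=
    (hb.neighborFinset_subset_left hv).ssubset_of_ne (fun h => by rw [h] at hlt; omega)
  have := ht.card_lt hb hN (singleton_subset_iff.2 hv) (singleton_nonempty v) (by simp)
  rw [card_singleton] at this
  omega

variable [DecidableEq V]

theorem BTough1.card_lt_card_add (ht : BTough1 G (X : Set V) Y)
    (hb : IsBipartition G (X : Set V) Y) {A B : Finset V} (hA : A ⊂ X) (hA₀ : A.Nonempty)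
    (hB : B ⊆ Y) : #B < #A + #{v ∈ B | #(G.neighborFinset v ∩ (X \ A)) ≠ 0} := by
  have hsplit := card_filter_add_card_filter_not (s := B)
    (fun v => #(G.neighborFinset v ∩ (X \ A)) ≠ 0)
  suffices #{v ∈ B | ¬ #(G.neighborFinset v ∩ (X \ A)) ≠ 0} < #A by omega
  rcases {v ∈ B | ¬ #(G.neighborFinset v ∩ (X \ A)) ≠ 0}.eq_empty_or_nonempty with h₀ | hne
  · simpa only [h₀, card_empty] using hA₀.card_pos
  · refine ht.card_lt hb hA ((filter_subset _ _).trans hB) hne fun v hv u huv => ?_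
    simp only [mem_filter, not_not, card_eq_zero, eq_empty_iff_forall_notMem, mem_inter,
      mem_neighborFinset, mem_sdiff] at hv
    by_contra hu
    exact hv.2 u ⟨huv, hb.mem_left huv.symm (hB hv.1), hu⟩

end ToughDegree

section SparseCut

open Finset

theorem sum_add_card_filter_ne_zero_le {ι : Type*} {s t : Finset ι} (f : ι → ℕ)
    (hst : s ⊆ t) : ∑ i ∈ s, f i + #{i ∈ t | f i ≠ 0} ≤ ∑ i ∈ t, f i + #s := by
  classical
  have hcard : #{i ∈ t | f i ≠ 0} ≤ #{i ∈ t \ s | f i ≠ 0} + #s :=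
    (card_le_card fun i hi => by
      rw [mem_filter] at hi
      simpa [hi.1, hi.2] using (em (i ∈ s)).symm).trans (card_union_le _ _)
  have hsum : #{i ∈ t \ s | f i ≠ 0} ≤ ∑ i ∈ t \ s, f i := by
    rw [card_filter]
    exact sum_le_sum fun i _ => by split_ifs <;> omega
  rw [← sum_sdiff hst]
  omega

variable {V : Type*} [Fintype V] [DecidableEq V] {G : SimpleGraph V} [DecidableRel G.Adj]
  {P Q : Finset V} {k : ℕ}

theorem card_neighborFinset_inter_lt (he : #(G.interedges P Q) < 2 * k)
    (hQ : k < #{v ∈ Q | #(G.neighborFinset v ∩ P) ≠ 0}) {v : V} (hv : v ∈ Q) :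
    #(G.neighborFinset v ∩ P) < k := by
  have h := sum_add_card_filter_ne_zero_le (fun v => #(G.neighborFinset v ∩ P))
    (singleton_subset_iff.2 hv)
  rw [sum_singleton, card_singleton, ← card_interedges_eq_sum_right] at h
  omega

theorem sum_card_neighborFinset_inter_add_three_le (he : #(G.interedges P Q) < 2 * k)
    (hQ : k < #{v ∈ Q | #(G.neighborFinset v ∩ P) ≠ 0})
    (hP : k < #{u ∈ P | #(G.neighborFinset u ∩ Q) ≠ 0}) {v : V} (hv : v ∈ Q) :
    ∑ u ∈ G.neighborFinset v ∩ P, #(G.neighborFinset u ∩ Q) + 3 ≤ 2 * k := by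
  have hv' := card_neighborFinset_inter_lt he hQ hv
  have h := sum_add_card_filter_ne_zero_le (fun u => #(G.neighborFinset u ∩ Q))
    (inter_subset_right (s₁ := G.neighborFinset v) (s₂ := P))
  rw [← card_interedges_eq_sum_left P] at h
  omega

end SparseCut

section ToughDeficientPair

open Finset

variable {V : Type*} [DecidableEq V] {G : SimpleGraph V} [DecidableRel G.Adj]
  {X Y A B : Finset V}

theorem IsDeficientPair.left_nonempty [Finite V] (h : IsDeficientPair G X Y A B)
    (ht : BTough1 G (X : Set V) Y) (hb : IsBipartition G (X : Set V) Y) (hX : 2 ≤ #X) :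
    A.Nonempty := by
  have := Fintype.ofFinite V
  rw [nonempty_iff_ne_empty]
  rintro rfl
  have hdeg : ∑ v ∈ B, 2 ≤ ∑ v ∈ B, #(G.neighborFinset v ∩ X) := sum_le_sum fun v hv => by
    rw [inter_eq_left.2 (hb.neighborFinset_subset_left (h.right_subset hv)),
      card_neighborFinset_eq_degree]
    exact ht.two_le_degree hb hX (h.right_subset hv)
  have hlt := h.lt
  rw [sdiff_empty, card_empty, card_interedges_eq_sum_right] at hlt
  rw [sum_const, smul_eq_mul] at hdeg
  omega

variable [Fintype V]

theorem IsDeficientPair.card_lt_card_add_left (h : IsDeficientPair G X Y A B)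
    (ht : BTough1 G (X : Set V) Y) (hb : IsBipartition G (X : Set V) Y) (hX : 2 ≤ #X)
    (hAB : #A + #B ≤ #X) : #B < #A + #{v ∈ B | #(G.neighborFinset v ∩ (X \ A)) ≠ 0} := by
  have hlt := h.lt
  have hA : A ⊂ X := h.left_subset.ssubset_of_ne (by rintro rfl; omega)
  exact ht.card_lt_card_add hb hA (h.left_nonempty ht hb hX) h.right_subset

theorem IsDeficientPair.card_lt_card_add_right (h : IsDeficientPair G X Y A B)
    (ht : BTough1 G (X : Set V) Y) (hb : IsBipartition G (X : Set V) Y) (hX : 2 ≤ #X)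
    (hXY : #X = #Y) (hAB : #A + #B ≤ #X) :
    #B < #A + #{u ∈ X \ A | #(G.neighborFinset u ∩ B) ≠ 0} := by
  have hA := (h.left_nonempty ht hb hX).card_pos
  have hlt := h.lt
  have hcardA := card_sdiff_add_card_eq_card h.left_subset
  have hcardB := card_sdiff_add_card_eq_card h.right_subset
  have hBY : Y \ B ⊂ Y := sdiff_ssubset h.right_subset (card_pos.1 (by omega))
  have hcut := ht.symm.card_lt_card_add hb.symm hBY (card_pos.1 (by omega))
    (sdiff_subset (s := X) (t := A))
  rw [Finset.sdiff_sdiff_eq_self h.right_subset] at hcut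
  omega

theorem IsDeficientPair.card_add_card_neighborFinset_lt (h : IsDeficientPair G X Y A B)
    (ht : BTough1 G (X : Set V) Y) (hb : IsBipartition G (X : Set V) Y) (hX : 2 ≤ #X)
    (hAB : #A + #B ≤ #X) {v : V} (hv : v ∈ B) : #A + #(G.neighborFinset v ∩ (X \ A)) < #B := by
  have hlt := h.lt
  have hright := h.card_lt_card_add_left ht hb hX hAB
  have := card_neighborFinset_inter_lt (G := G) (P := X \ A) (k := #B - #A) (by omega) (by omega) hv
  omega

theorem IsDeficientPair.sum_card_neighborFinset_add_three_le (h : IsDeficientPair G X Y A B)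
    (ht : BTough1 G (X : Set V) Y) (hb : IsBipartition G (X : Set V) Y) (hX : 2 ≤ #X)
    (hXY : #X = #Y) (hAB : #A + #B ≤ #X) {v : V} (hv : v ∈ B) :
    2 * #A + ∑ u ∈ G.neighborFinset v ∩ (X \ A), #(G.neighborFinset u ∩ B) + 3 ≤ 2 * #B := by
  have hlt := h.lt
  have hright := h.card_lt_card_add_left ht hb hX hAB
  have hleft := h.card_lt_card_add_right ht hb hX hXY hAB
  have := sum_card_neighborFinset_inter_add_three_le (G := G) (P := X \ A) (k := #B - #A)
    (by omega) (by omega) (by omega) hv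
  omega

omit [Fintype V] in
theorem IsDeficientPair.card_add_two_le [Finite V] (h : IsDeficientPair G X Y A B)
    (ht : BTough1 G (X : Set V) Y) (hb : IsBipartition G (X : Set V) Y) (hX : 2 ≤ #X)
    (hXY : #X = #Y) (hAB : #A + #B ≤ #X) : #A + 2 ≤ #B := by
  have := Fintype.ofFinite V
  have hlt := h.lt
  obtain ⟨v, hv⟩ : B.Nonempty := card_pos.1 (by omega)
  have := h.sum_card_neighborFinset_add_three_le ht hb hX hXY hAB hv
  omega

end ToughDeficientPair

section UpperBound

open Finset Matrix

variable {V : Type*} [DecidableEq V]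

/-- The test vector for the upper bound on `ρ(G)²` in the presence of a deficient pair `(A, B)`:
it is `3` on `B`, `5` on `Y \ B`, and `0` elsewhere. The ratio `5 : 3` is chosen so that the
two entries of the resulting bound stay below `n (n - 3) + 12 / n` whenever `|B| ≥ 4`. -/
def partWeight (Y B : Finset V) (v : V) : ℝ :=
  5 * (if v ∈ Y \ B then 1 else 0) + 3 * if v ∈ B then 1 else 0

theorem sum_partWeight (Y B s : Finset V) :
    ∑ v ∈ s, partWeight Y B v = 5 * #(s ∩ (Y \ B)) + 3 * #(s ∩ B) := by
  simp only [partWeight, sum_add_distrib, ← mul_sum, sum_boole, filter_mem_eq_inter]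

theorem partWeight_of_mem {Y B : Finset V} {v : V} (hv : v ∈ B) : partWeight Y B v = 3 := by
  simp [partWeight, hv]

theorem partWeight_of_mem_sdiff {Y B : Finset V} {v : V} (hv : v ∈ Y \ B) :
    partWeight Y B v = 5 := by
  simp [partWeight, hv, (mem_sdiff.1 hv).2]

theorem partWeight_of_notMem {Y B : Finset V} (hBY : B ⊆ Y) {v : V} (hv : v ∉ Y) :
    partWeight Y B v = 0 := by
  simp [partWeight, hv, notMem_mono hBY hv]

variable [Fintype V] {G : SimpleGraph V} [DecidableRel G.Adj] {X Y A B : Finset V}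

theorem adjMatrix_mulVec_partWeight (u : V) : (G.adjMatrix ℝ *ᵥ partWeight Y B) u =
    5 * #(G.neighborFinset u ∩ (Y \ B)) + 3 * #(G.neighborFinset u ∩ B) := by
  rw [adjMatrix_mulVec_apply, sum_partWeight]

theorem IsBipartition.adjMatrix_mulVec_mulVec_partWeight_of_mem_left
    (hb : IsBipartition G (X : Set V) Y) (hBY : B ⊆ Y) {u : V} (hu : u ∈ X) :
    (G.adjMatrix ℝ *ᵥ G.adjMatrix ℝ *ᵥ partWeight Y B) u = 0 := by
  rw [adjMatrix_mulVec_apply]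
  refine sum_eq_zero fun v hv => ?_
  rw [adjMatrix_mulVec_apply]
  refine sum_eq_zero fun w hw => partWeight_of_notMem hBY fun hwY => ?_
  have hvX := hb.mem_left ((G.mem_neighborFinset v w).1 hw) hwY
  exact Finset.disjoint_left.1 hb.disjoint hvX (hb.neighborFinset_subset_right hu hv)

theorem IsBipartition.adjMatrix_mulVec_mulVec_partWeight_le
    (hb : IsBipartition G (X : Set V) Y) (A : Finset V) {v : V} (hv : v ∈ Y) :
    (G.adjMatrix ℝ *ᵥ G.adjMatrix ℝ *ᵥ partWeight Y B) v ≤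
      #A * (5 * #(Y \ B) + 3 * #B) + #(G.neighborFinset v ∩ (X \ A)) * (5 * #(Y \ B)) +
        3 * ∑ u ∈ G.neighborFinset v ∩ (X \ A), (#(G.neighborFinset u ∩ B) : ℝ) := by
  have hle (s t : Finset V) : (#(s ∩ t) : ℝ) ≤ #t :=
    Nat.cast_le.2 (card_le_card inter_subset_right)
  have hA : ∑ u ∈ G.neighborFinset v ∩ A, (G.adjMatrix ℝ *ᵥ partWeight Y B) u ≤
      #A * (5 * #(Y \ B) + 3 * #B) := by
    calc _ ≤ ∑ u ∈ G.neighborFinset v ∩ A, (5 * #(Y \ B) + 3 * #B : ℝ) :=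
          sum_le_sum fun u _ => by
            rw [adjMatrix_mulVec_partWeight]
            linarith [hle (G.neighborFinset u) (Y \ B), hle (G.neighborFinset u) B]
      _ ≤ _ := by
        rw [sum_const, nsmul_eq_mul]
        exact mul_le_mul_of_nonneg_right (hle _ _) (by positivity)
  have hXA : ∑ u ∈ G.neighborFinset v ∩ (X \ A), (G.adjMatrix ℝ *ᵥ partWeight Y B) u ≤
      #(G.neighborFinset v ∩ (X \ A)) * (5 * #(Y \ B)) +
        3 * ∑ u ∈ G.neighborFinset v ∩ (X \ A), (#(G.neighborFinset u ∩ B) : ℝ) := by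
    rw [← nsmul_eq_mul, ← sum_const, mul_sum, ← sum_add_distrib]
    refine sum_le_sum fun u _ => ?_
    rw [adjMatrix_mulVec_partWeight]
    linarith [hle (G.neighborFinset u) (Y \ B)]
  have hunion : G.neighborFinset v ∩ A ∪ G.neighborFinset v ∩ (X \ A) = G.neighborFinset v := by
    have := hb.neighborFinset_subset_left hv
    grind
  have hsplit := sum_union (f := G.adjMatrix ℝ *ᵥ partWeight Y B) <|
    disjoint_sdiff.mono (inter_subset_right (s₁ := G.neighborFinset v) (s₂ := A))
      (inter_subset_right (s₁ := G.neighborFinset v) (s₂ := X \ A))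
  rw [hunion] at hsplit
  rw [adjMatrix_mulVec_apply, hsplit, add_assoc]
  exact add_le_add hA hXA

theorem IsDeficientPair.adjMatrix_mulVec_mulVec_partWeight_le_of_mem_sdiff
    (h : IsDeficientPair G X Y A B) (hb : IsBipartition G (X : Set V) Y) {v : V} (hv : v ∈ Y \ B) :
    (G.adjMatrix ℝ *ᵥ G.adjMatrix ℝ *ᵥ partWeight Y B) v ≤
      5 * (#X * #(Y \ B)) + 3 * (#A * #B + 2 * (#B - #A) - 1) := by
  have hdeg : #(G.neighborFinset v ∩ (X \ A)) + #A ≤ #X :=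
    (Nat.add_le_add_right (card_le_card inter_subset_right) _).trans_eq
      (card_sdiff_add_card_eq_card h.left_subset)
  have htwo : ∑ u ∈ G.neighborFinset v ∩ (X \ A), #(G.neighborFinset u ∩ B) + 1 + 2 * #A ≤
      2 * #B := by
    have hle : ∑ u ∈ G.neighborFinset v ∩ (X \ A), #(G.neighborFinset u ∩ B) ≤
        ∑ u ∈ X \ A, #(G.neighborFinset u ∩ B) := sum_le_sum_of_subset inter_subset_right
    have hlt := h.lt
    rw [card_interedges_eq_sum_left] at hlt
    omega
  rify at hdeg htwo
  refine (hb.adjMatrix_mulVec_mulVec_partWeight_le A (mem_sdiff.1 hv).1).trans ?_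
  nlinarith [mul_le_mul_of_nonneg_right hdeg (Nat.cast_nonneg (α := ℝ) #(Y \ B))]

theorem IsDeficientPair.adjMatrix_mulVec_mulVec_partWeight_le_of_mem
    (h : IsDeficientPair G X Y A B) (ht : BTough1 G (X : Set V) Y)
    (hb : IsBipartition G (X : Set V) Y) (hX : 2 ≤ #X) (hXY : #X = #Y) (hAB : #A + #B ≤ #X)
    {v : V} (hv : v ∈ B) :
    (G.adjMatrix ℝ *ᵥ G.adjMatrix ℝ *ᵥ partWeight Y B) v ≤
      5 * ((#B - 1) * #(Y \ B)) + 3 * (#A * #B + 2 * (#B - #A) - 3) := by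
  have hdeg : #A + #(G.neighborFinset v ∩ (X \ A)) + 1 ≤ #B :=
    h.card_add_card_neighborFinset_lt ht hb hX hAB hv
  have htwo := h.sum_card_neighborFinset_add_three_le ht hb hX hXY hAB hv
  rify at hdeg htwo
  refine (hb.adjMatrix_mulVec_mulVec_partWeight_le A (h.right_subset hv)).trans ?_
  nlinarith [mul_le_mul_of_nonneg_right hdeg (Nat.cast_nonneg (α := ℝ) #(Y \ B))]

-- The term `12 / n` is only needed in the cases `b = 4`, `m ≤ 2`.
theorem partWeight_bound_le_of_mem_sdiff {a b m : ℕ} (ha : 1 ≤ a) (hab : a + 2 ≤ b) (hb : 4 ≤ b)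
    (ham : a ≤ m) :
    5 * ((m + b) * m) + 3 * (a * b + 2 * (b - a) - 1) ≤
      5 * ((m + b) * (m + b - 3) + 12 / (m + b) : ℝ) := by
  have hnonneg : (0 : ℝ) ≤ 12 / (m + b) := by positivity
  obtain ⟨rfl, hm⟩ | ⟨rfl, hm⟩ | hb : b = 4 ∧ m ≤ 2 ∨ b = 4 ∧ 3 ≤ m ∨ 5 ≤ b := by omega
  · interval_cases m <;> interval_cases a <;> norm_num
  · rify at hab hm
    push_cast at hnonneg ⊢
    linarith
  · rify at ham hb
    nlinarith

theorem partWeight_bound_le_of_mem {a b m : ℕ} (ha : 1 ≤ a) (hab : a + 2 ≤ b) (hb : 4 ≤ b)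
    (ham : a ≤ m) :
    5 * ((b - 1) * m) + 3 * (a * b + 2 * (b - a) - 3) ≤
      3 * ((m + b) * (m + b - 3) + 12 / (m + b) : ℝ) := by
  have hnonneg : (0 : ℝ) ≤ 12 / (m + b) := by positivity
  obtain ⟨rfl, hm⟩ | ⟨rfl, hm⟩ | hb : b = 4 ∧ m ≤ 2 ∨ b = 4 ∧ 3 ≤ m ∨ 5 ≤ b := by omega
  · interval_cases m <;> interval_cases a <;> norm_num
  · rify at hab hm
    push_cast at hnonneg ⊢
    nlinarith
  · rify at ham hb
    nlinarith [sq_nonneg (3 * m - b : ℝ),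
      mul_le_mul_of_nonneg_right ham (by linarith : (0 : ℝ) ≤ b - 2)]

theorem IsDeficientPair.specRad_sq_le (h : IsDeficientPair G X Y A B) (hG : G.Connected)
    (ht : BTough1 G (X : Set V) Y) (hb : IsBipartition G (X : Set V) Y) (hXY : #X = #Y)
    (hAB : #A + #B ≤ #X) (hB : 4 ≤ #B) :
    specRad G ^ 2 ≤ #X * (#X - 3) + 12 / #X := by
  have hX : 2 ≤ #X := by omega
  have hA : 1 ≤ #A := (h.left_nonempty ht hb hX).card_pos
  have hab := h.card_add_two_le ht hb hX hXY hAB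
  have hcard := card_sdiff_add_card_eq_card h.right_subset
  have ham : #A ≤ #(Y \ B) := by omega
  have hn : (#X : ℝ) = #(Y \ B) + #B := by rw [hXY, ← hcard, Nat.cast_add]
  refine specRad_sq_le_of_le_smul hG (y := partWeight Y B) ?_ fun v => ?_
  · obtain ⟨v, hv⟩ : B.Nonempty := card_pos.1 (by omega)
    refine Pi.lt_def.2 ⟨fun w => by simp only [partWeight]; positivity, v, ?_⟩
    rw [partWeight_of_mem hv]
    exact three_pos
  rw [Pi.smul_apply, smul_eq_mul, mul_comm]
  rcases hb.mem_left_or_mem_right v with hvX | hvY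
  · rw [hb.adjMatrix_mulVec_mulVec_partWeight_of_mem_left h.right_subset hvX,
      partWeight_of_notMem h.right_subset (Finset.disjoint_left.1 hb.disjoint hvX), zero_mul]
  by_cases hvB : v ∈ B
  · rw [partWeight_of_mem hvB, hn]
    exact (h.adjMatrix_mulVec_mulVec_partWeight_le_of_mem ht hb hX hXY hAB hvB).trans
      (partWeight_bound_le_of_mem hA hab hB ham)
  · rw [partWeight_of_mem_sdiff (mem_sdiff.2 ⟨hvY, hvB⟩), hn]
    refine (h.adjMatrix_mulVec_mulVec_partWeight_le_of_mem_sdiff hb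
      (mem_sdiff.2 ⟨hvY, hvB⟩)).trans ?_
    rw [hn]
    exact partWeight_bound_le_of_mem_sdiff hA hab hB ham

end UpperBound

section ExtremalGraph

open Finset

theorem exists_equiv_extend_fin {α : Type*} {s : Finset α} {m n : ℕ}
    (hs : #s = n) (hmn : m ≤ n) {p : Fin m → α} (hp : Function.Injective p) (hps : ∀ i, p i ∈ s) :
    ∃ e : Fin n ≃ s, ∀ i, (e (Fin.castLE hmn i) : α) = p i := by
  classical
  let f : Fin n → α :=
    Function.extend (Fin.castLE hmn) p fun i => (s.equivFinOfCardEq hs).symm i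
  have hf (i : Fin m) : f (Fin.castLE hmn i) = p i :=
    (Fin.castLE_injective hmn).extend_apply p _ i
  obtain ⟨e, he⟩ := exists_equiv_extend_of_card_eq (α := Fin n) (t := s)
    (s := univ.image (Fin.castLE hmn)) (f := f) (by simp [hs])
    (by simpa [image_image, image_subset_iff, hf] using hps) (by
      simp only [Set.InjOn, coe_image, coe_univ, Set.image_univ, Set.forall_mem_range, hf]
      exact fun i j hij => congrArg _ (hp hij))
  exact ⟨e, fun i => (he _ (mem_image_of_mem _ (mem_univ i))).trans (hf i)⟩

variable {V : Type*} {G : SimpleGraph V} {X Y A B : Finset V} {n : ℕ}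

theorem IsBipartition.exists_comap_le_gnn (hb : IsBipartition G (X : Set V) Y) (hn : 4 ≤ n)
    (hX : #X = n) (hY : #Y = n) {p : Fin 4 → V} (hp : Function.Injective p) (hpX : ∀ i, p i ∈ X)
    {q : Fin 3 → V} (hq : Function.Injective q) (hqY : ∀ j, q j ∈ Y)
    (hadj : ∀ u j, G.Adj u (q j) → u = p 0 ∨ u = p j.succ) :
    ∃ e : Fin n ⊕ Fin n ≃ V, G.comap e ≤ Gnn n := by
  classical
  obtain ⟨eX, heX⟩ := exists_equiv_extend_fin hX hn hp hpX
  obtain ⟨eY, heY⟩ := exists_equiv_extend_fin hY (by omega : 3 ≤ n) hq hqY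
  have hcross (i j : Fin n) (hij : G.Adj (eX i) (eY j)) : (Gnn n).Adj (.inl i) (.inr j) := by
    have heq {i' : Fin n} (h : (eX i : V) = eX i') : (i : ℕ) = i' :=
      congrArg Fin.val (eX.injective (Subtype.ext h))
    rw [gnn_adj_inl_inr]
    by_cases hj : 3 ≤ (j : ℕ)
    · exact .inl hj
    have hqj : (eY j : V) = q ⟨j, by omega⟩ := heY ⟨j, by omega⟩
    rw [hqj] at hij
    rcases hadj _ _ hij with h | h
    · exact .inr (.inl (heq (h.trans (heX 0).symm)))
    · exact .inr (.inr (heq (h.trans (heX _).symm)))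
  refine ⟨((eX.sumCongr eY).trans (Equiv.Finset.union X Y hb.disjoint)).trans
    (Equiv.subtypeUnivEquiv fun v => mem_union.2 (hb.mem_left_or_mem_right v)), ?_⟩
  have hXY {v : V} (hvX : v ∈ X) : v ∉ Y := Finset.disjoint_left.1 hb.disjoint hvX
  rintro (i | i) (j | j) hij
  · exact absurd (hb.symm.mem_left hij (eX j).2) (hXY (eX i).2)
  · exact hcross i j hij
  · exact (hcross j i hij.symm).symm
  · exact absurd (eY i).2 (hXY (hb.mem_left hij (eY j).2))

variable [DecidableEq V] [DecidableRel G.Adj]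

theorem IsDeficientPair.exists_injOn_neighborFinset_inter_eq_singleton [Fintype V]
    (h : IsDeficientPair G X Y A B) (ht : BTough1 G (X : Set V) Y)
    (hb : IsBipartition G (X : Set V) Y) (hXY : #X = #Y) (hAB : #A + #B ≤ #X)
    (hA : #A = 1) (hB : #B = 3) :
    ∃ g : V → V, Set.InjOn g B ∧ ∀ v ∈ B, G.neighborFinset v ∩ (X \ A) = {g v} := by
  have hX : 2 ≤ #X := by omega
  have hne : ∀ v ∈ B, #(G.neighborFinset v ∩ (X \ A)) ≠ 0 := by
    have hlt := h.card_lt_card_add_left ht hb hX hAB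
    exact filter_card_eq ((card_filter_le _ _).antisymm (by omega))
  have hone : ∀ v ∈ B, ∃ u, G.neighborFinset v ∩ (X \ A) = {u} := fun v hv => by
    have hlt := h.card_add_card_neighborFinset_lt ht hb hX hAB hv
    have := hne v hv
    exact card_eq_one.1 (by omega)
  choose! g hg using hone
  refine ⟨g, fun v hv w hw hvw => ?_, hg⟩
  have hsum := h.sum_card_neighborFinset_add_three_le ht hb hX hXY hAB hv
  rw [hg v hv, sum_singleton] at hsum
  have hmem {x : V} (hx : x ∈ B) : x ∈ G.neighborFinset (g x) ∩ B := by
    have := (mem_inter.1 ((hg x hx).symm ▸ mem_singleton_self (g x))).1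
    simpa [hx, G.adj_comm] using this
  exact card_le_one.1 (by omega) v (hmem hv) w (hvw ▸ hmem hw)

theorem IsDeficientPair.exists_comap_le_gnn [Finite V] (h : IsDeficientPair G X Y A B)
    (ht : BTough1 G (X : Set V) Y) (hb : IsBipartition G (X : Set V) Y) (hX : #X = n)
    (hY : #Y = n) (hAB : #A + #B ≤ n) (hA : #A = 1) (hB : #B = 3) :
    ∃ e : Fin n ⊕ Fin n ≃ V, G.comap e ≤ Gnn n := by
  have := Fintype.ofFinite V
  obtain ⟨g, hginj, hg⟩ := h.exists_injOn_neighborFinset_inter_eq_singleton ht hb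
    (hX.trans hY.symm) (hX ▸ hAB) hA hB
  obtain ⟨a, rfl⟩ := card_eq_one.1 hA
  have hgX {v : V} (hv : v ∈ B) : g v ∈ X ∧ g v ≠ a := by
    have := (mem_inter.1 ((hg v hv).symm ▸ mem_singleton_self (g v))).2
    simpa only [mem_sdiff, mem_singleton] using this
  let b : Fin 3 ≃ B := (B.equivFinOfCardEq hB).symm
  refine hb.exists_comap_le_gnn (by omega) hX hY (p := Fin.cons a fun j => g (b j))
    (q := fun j => b j) ?_ ?_ ?_ (fun j => h.right_subset (b j).2) fun u j huj => ?_
  · refine Fin.cons_injective_iff.2 ⟨?_, fun i j hij => ?_⟩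
    · rintro ⟨j, hj⟩
      exact (hgX (b j).2).2 hj
    · exact b.injective (Subtype.ext (hginj (b i).2 (b j).2 hij))
  · exact Fin.cases (h.left_subset (mem_singleton_self a)) fun j => (hgX (b j).2).1
  · exact fun i j hij => b.injective (Subtype.ext hij)
  · have huX := hb.mem_left huj (h.right_subset (b j).2)
    by_cases hua : u = a
    · exact .inl hua
    · have : u ∈ G.neighborFinset (b j) ∩ (X \ {a}) := by simp [huj.symm, huX, hua]
      rw [hg _ (b j).2, mem_singleton] at this
      exact .inr this

end ExtremalGraph

section Extremal

open Finset

variable {V : Type*} [Fintype V] {G : SimpleGraph V} {n : ℕ}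

theorem IsDeficientPair.nonempty_iso_gnn [DecidableEq V] [DecidableRel G.Adj] {X Y A B : Finset V}
    (h : IsDeficientPair G X Y A B) (hG : G.Connected) (ht : BTough1 G (X : Set V) Y)
    (hb : IsBipartition G (X : Set V) Y) (hn : 2 ≤ n) (hX : #X = n) (hY : #Y = n)
    (hAB : #A + #B ≤ n) (hrho : specRad (Gnn n) ≤ specRad G) : Nonempty (G ≃g Gnn n) := by
  subst hX
  have hA := (h.left_nonempty ht hb hn).card_pos
  have hab := h.card_add_two_le ht hb hn hY.symm hAB
  obtain hB | ⟨hA, hB⟩ : 4 ≤ #B ∨ #A = 1 ∧ #B = 3 := by omega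
  · have hlower := lt_specRad_gnn_sq (n := #X) (by omega)
    have hupper := h.specRad_sq_le hG ht hb hY.symm hAB hB
    have hsq := pow_le_pow_left₀ (specRad_nonneg (gnn_connected (by omega))) hrho 2
    exact absurd (hlower.trans_le hsq) hupper.not_gt
  · obtain ⟨e, he⟩ := h.exists_comap_le_gnn ht hb rfl hY hAB hA hB
    exact nonempty_iso_of_comap_le hG hrho e he

theorem stmt1_general (hn : 2 ≤ n) {X Y : Set V} (hconn : G.Connected) (hbip : IsBipartition G X Y)
    (hX : X.ncard = n) (hY : Y.ncard = n) (htough : BTough1 G X Y)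
    (hrho : specRad (Gnn n) ≤ specRad G) : Has2Factor G ∨ Nonempty (G ≃g Gnn n) := by
  classical
  lift X to Finset V using X.toFinite
  lift Y to Finset V using Y.toFinite
  rw [Set.ncard_coe_finset] at hX hY
  refine or_iff_not_imp_left.2 fun hfactor => ?_
  obtain ⟨A, B, h⟩ := hbip.exists_isDeficientPair (hX.trans hY.symm) hfactor
  have hA := card_sdiff_add_card_eq_card h.left_subset
  have hB := card_sdiff_add_card_eq_card h.right_subset
  rcases le_or_gt (#A + #B) n with hAB | hAB
  · exact h.nonempty_iso_gnn hconn htough hbip hn hX hY hAB hrho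
  · exact (h.swap (hX.trans hY.symm)).nonempty_iso_gnn hconn htough.symm hbip.symm hn hY hX
      (by omega) hrho

end Extremal

/-- A connected 1-tough balanced bipartite graph of order `2n` (`n ≥ 5`) with
`ρ(G) ≥ ρ(G_{n,n})` contains a 2-factor, unless `G ≅ G_{n,n}`. -/
theorem stmt1 {V : Type*} [Fintype V] [DecidableEq V] (n : ℕ) (hn : 5 ≤ n)
    (G : SimpleGraph V) (X Y : Set V)
    (hconn : G.Connected)
    (hbip : IsBipartition G X Y) (hX : X.ncard = n) (hY : Y.ncard = n)
    (htough : BTough1 G X Y)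
    (hrho : specRad (Gnn n) ≤ specRad G) :
    Has2Factor G ∨ Nonempty (G ≃g Gnn n) :=
  stmt1_general (by omega) hconn hbip hX hY htough hrho
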